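/- Let E be a real inner product space, let (u_ν)_{ν ∈ Fin K} be an orthonormal family in E, let p : Fin N → E be N points with ‖p_i‖ ≤ 1 for all i, let ν★ : Fin N → Fin K assign to each point a dominant frequency, and let δ : Fin N → ℝ with δ_i > 0 satisfy ⟨u_{ν★(i)}, p_i⟩² − ⟨u_ν, p_i⟩² ≥ δ_i for all i and all ν ≠ ν★(i). Let Δ : Fin N → E be a perturbation and set R := (∑_i ‖Δ_i‖²)^{1/2}. If 2R + R² < δ_i/2 for every i, then for every i and every ν ≠ ν★(i), ⟨u_{ν★(i)}, p_i + Δ_i⟩² > ⟨u_ν, p_i + Δ_i⟩²; i.e., no point's dominant frequency changes. -/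

import Mathlib

open InnerProductSpace

/-! By the difference of squares and Cauchy–Schwarz, moving a point of the unit ball by `d` changes
its energy at each frequency by at most `2‖d‖ + ‖d‖²`. A gap between two energies can therefore
shrink by at most twice this amount, whence the factor `1/2` in front of the gap. -/

theorem abs_norm_add_sq_sub_norm_sq_le {F : Type*} [SeminormedAddCommGroup F] (a b : F) :
    |‖a + b‖ ^ 2 - ‖a‖ ^ 2| ≤ 2 * ‖a‖ * ‖b‖ + ‖b‖ ^ 2 := by
  have hsub : |‖a + b‖ - ‖a‖| ≤ ‖b‖ := by simpa using abs_norm_sub_norm_le (a + b) a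
  have hadd : ‖a + b‖ + ‖a‖ ≤ 2 * ‖a‖ + ‖b‖ := by linarith [norm_add_le a b]
  calc |‖a + b‖ ^ 2 - ‖a‖ ^ 2| = (‖a + b‖ + ‖a‖) * |‖a + b‖ - ‖a‖| := by
        rw [sq_sub_sq, abs_mul, abs_of_nonneg (by positivity)]
    _ ≤ (2 * ‖a‖ + ‖b‖) * ‖b‖ := by gcongr
    _ = 2 * ‖a‖ * ‖b‖ + ‖b‖ ^ 2 := by ring

theorem norm_le_sqrt_sum_norm_sq {ι F : Type*} [Fintype ι] [SeminormedAddCommGroup F]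
    (f : ι → F) (i : ι) : ‖f i‖ ≤ √(∑ j, ‖f j‖ ^ 2) := by
  simpa only [PiLp.norm_eq_of_L2] using PiLp.norm_apply_le (WithLp.toLp 2 f) i

section Energy

variable {𝕜 E : Type*} [RCLike 𝕜] [SeminormedAddCommGroup E] [InnerProductSpace 𝕜 E]

theorem abs_norm_inner_add_sq_sub_norm_inner_sq_le (v x d : E) :
    |‖⟪v, x + d⟫_𝕜‖ ^ 2 - ‖⟪v, x⟫_𝕜‖ ^ 2| ≤ ‖v‖ ^ 2 * (2 * ‖x‖ * ‖d‖ + ‖d‖ ^ 2) :=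
  calc |‖⟪v, x + d⟫_𝕜‖ ^ 2 - ‖⟪v, x⟫_𝕜‖ ^ 2|
      ≤ 2 * ‖⟪v, x⟫_𝕜‖ * ‖⟪v, d⟫_𝕜‖ + ‖⟪v, d⟫_𝕜‖ ^ 2 := by
        rw [inner_add_right]
        exact abs_norm_add_sq_sub_norm_sq_le _ _
    _ ≤ 2 * (‖v‖ * ‖x‖) * (‖v‖ * ‖d‖) + (‖v‖ * ‖d‖) ^ 2 := by
        gcongr <;> exact norm_inner_le_norm _ _
    _ = ‖v‖ ^ 2 * (2 * ‖x‖ * ‖d‖ + ‖d‖ ^ 2) := by ring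

theorem norm_inner_add_sq_lt_of_lt_sub {v w x d : E}
    (h : (‖v‖ ^ 2 + ‖w‖ ^ 2) * (2 * ‖x‖ * ‖d‖ + ‖d‖ ^ 2) < ‖⟪w, x⟫_𝕜‖ ^ 2 - ‖⟪v, x⟫_𝕜‖ ^ 2) :
    ‖⟪v, x + d⟫_𝕜‖ ^ 2 < ‖⟪w, x + d⟫_𝕜‖ ^ 2 := by
  have hv := (abs_le.1 (abs_norm_inner_add_sq_sub_norm_inner_sq_le (𝕜 := 𝕜) v x d)).2
  have hw := (abs_le.1 (abs_norm_inner_add_sq_sub_norm_inner_sq_le (𝕜 := 𝕜) w x d)).1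
  linarith

theorem slice_stability_general {ι κ : Type*} {u : κ → E} (hu : ∀ ν, ‖u ν‖ ≤ 1)
    {p : ι → E} (hp : ∀ i, ‖p i‖ ≤ 1) {νstar : ι → κ} {δ : ι → ℝ}
    (hgap : ∀ i, ∀ ν, ν ≠ νstar i → δ i ≤ ‖⟪u (νstar i), p i⟫_𝕜‖ ^ 2 - ‖⟪u ν, p i⟫_𝕜‖ ^ 2)
    {Δ : ι → E} (hΔ : ∀ i, 2 * ‖Δ i‖ + ‖Δ i‖ ^ 2 < δ i / 2) :
    ∀ i, ∀ ν, ν ≠ νstar i →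
      ‖⟪u ν, p i + Δ i⟫_𝕜‖ ^ 2 < ‖⟪u (νstar i), p i + Δ i⟫_𝕜‖ ^ 2 := by
  intro i ν hν
  apply norm_inner_add_sq_lt_of_lt_sub
  calc (‖u ν‖ ^ 2 + ‖u (νstar i)‖ ^ 2) * (2 * ‖p i‖ * ‖Δ i‖ + ‖Δ i‖ ^ 2)
      ≤ (1 ^ 2 + 1 ^ 2) * (2 * 1 * ‖Δ i‖ + ‖Δ i‖ ^ 2) := by
        gcongr
        exacts [hu ν, hu (νstar i), hp i]
    _ < δ i := by linarith [hΔ i]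
    _ ≤ ‖⟪u (νstar i), p i⟫_𝕜‖ ^ 2 - ‖⟪u ν, p i⟫_𝕜‖ ^ 2 := hgap i ν hν

end Energy

theorem slice_stability {E : Type*} [NormedAddCommGroup E] [InnerProductSpace ℝ E]
    (K N : ℕ) (u : Fin K → E) (hu : Orthonormal ℝ u)
    (p : Fin N → E) (hp : ∀ i, ‖p i‖ ≤ 1)
    (νstar : Fin N → Fin K) (δ : Fin N → ℝ) (hδ : ∀ i, 0 < δ i)
    (hgap : ∀ i, ∀ ν : Fin K, ν ≠ νstar i →
      δ i ≤ ⟪u (νstar i), p i⟫_ℝ ^ 2 - ⟪u ν, p i⟫_ℝ ^ 2)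
    (Δ : Fin N → E)
    (hR : ∀ i, 2 * Real.sqrt (∑ j, ‖Δ j‖ ^ 2) + Real.sqrt (∑ j, ‖Δ j‖ ^ 2) ^ 2
        < δ i / 2) :
    ∀ i, ∀ ν : Fin K, ν ≠ νstar i →
      ⟪u ν, p i + Δ i⟫_ℝ ^ 2 < ⟪u (νstar i), p i + Δ i⟫_ℝ ^ 2 := by
  have hΔ (i : Fin N) : 2 * ‖Δ i‖ + ‖Δ i‖ ^ 2 < δ i / 2 :=
    lt_of_le_of_lt (by gcongr <;> exact norm_le_sqrt_sum_norm_sq Δ i) (hR i)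
  simpa only [Real.norm_eq_abs, sq_abs] using
    slice_stability_general (𝕜 := ℝ) (fun ν ↦ (hu.norm_eq_one ν).le) hp
      (by simpa only [Real.norm_eq_abs, sq_abs] using hgap) hΔ
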